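/- For real t > 0 and 0 < α ≤ 1, 0 < αγ ≤ β ≤ 1, the function t ↦ t^{β-1} E_{α,β}^γ(-t^α) is completely monotonic on (0, ∞): it is infinitely differentiable and (-1)^k (d^k/dt^k)[t^{β-1} E_{α,β}^γ(-t^α)] ≥ 0 for all k ≥ 0 and t > 0. -/

import Mathlib

open scoped BigOperators
/-- Pochhammer symbol `(γ)_k = γ(γ+1)⋯(γ+k-1)`. -/
noncomputable def poch (γ : ℝ) (k : ℕ) : ℝ := ∏ i ∈ Finset.range k, (γ + i)

/-- The real-argument Prabhakar function `E_{α,β}^γ(x)`. -/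
noncomputable def prabhakarR (α β γ : ℝ) (x : ℝ) : ℝ :=
  ∑' k : ℕ, poch γ k * x ^ k / (Nat.factorial k * Real.Gamma (α * k + β))

open Filter Topology

/-- Complete monotonicity up to order `n`, by finite differences. -/
def CMn : ℕ → (ℝ → ℝ) → Prop
  | 0, f => ∀ t, 0 < t → 0 ≤ f t
  | n + 1, f => (∀ t, 0 < t → 0 ≤ f t) ∧ ∀ h, 0 < h → CMn n (fun t => f t - f (t + h))

theorem CMn.nonneg {n : ℕ} {f : ℝ → ℝ} (hf : CMn n f) : ∀ t, 0 < t → 0 ≤ f t := by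
  cases n with
  | zero => exact hf
  | succ n => exact hf.1

theorem CMn.mono {n : ℕ} : ∀ {f : ℝ → ℝ}, CMn (n + 1) f → CMn n f := by
  induction n with
  | zero => intro f hf; exact hf.1
  | succ n ih => intro f hf; exact ⟨hf.1, fun h hh => ih (hf.2 h hh)⟩

theorem CMn.lim {ι : Type*} {l : Filter ι} [l.NeBot] {n : ℕ} : ∀ {F : ι → ℝ → ℝ} {f : ℝ → ℝ},
    (∀ᶠ i in l, CMn n (F i)) → (∀ t, 0 < t → Tendsto (fun i => F i t) l (𝓝 (f t))) → CMn n f := by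
  induction n with
  | zero =>
    intro F f hF hl t ht
    exact ge_of_tendsto (hl t ht) (hF.mono fun i hi => hi t ht)
  | succ n ih =>
    intro F f hF hl
    refine ⟨fun t ht => ge_of_tendsto (hl t ht) (hF.mono fun i hi => hi.1 t ht), fun h hh => ?_⟩
    exact ih (F := fun i t => F i t - F i (t + h)) (hF.mono fun i hi => hi.2 h hh)
      (fun t ht => (hl t ht).sub (hl (t + h) (by linarith)))

theorem CMn.congr {n : ℕ} {f g : ℝ → ℝ} (hf : CMn n f) (h : ∀ t, 0 < t → f t = g t) : CMn n g :=
  CMn.lim (l := (atTop : Filter ℕ)) (F := fun _ => f) (Eventually.of_forall fun _ => hf)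
    (fun t ht => by rw [h t ht]; exact tendsto_const_nhds)

theorem CMn.add {n : ℕ} : ∀ {f g : ℝ → ℝ}, CMn n f → CMn n g → CMn n (fun t => f t + g t) := by
  induction n with
  | zero => intro f g hf hg t ht; exact add_nonneg (hf t ht) (hg t ht)
  | succ n ih =>
    intro f g hf hg
    refine ⟨fun t ht => add_nonneg (hf.1 t ht) (hg.1 t ht), fun h hh => ?_⟩
    exact (ih (hf.2 h hh) (hg.2 h hh)).congr fun t _ => by ring

theorem CMn.shift {n : ℕ} {s : ℝ} (hs : 0 < s) :
    ∀ {f : ℝ → ℝ}, CMn n f → CMn n (fun t => f (t + s)) := by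
  induction n with
  | zero => intro f hf t ht; exact hf _ (by linarith)
  | succ n ih =>
    intro f hf
    refine ⟨fun t ht => hf.1 _ (by linarith), fun h hh => ?_⟩
    exact (ih (hf.2 h hh)).congr fun t _ => by rw [add_right_comm]

theorem CMn.scale {n : ℕ} {s : ℝ} (hs : 0 < s) :
    ∀ {f : ℝ → ℝ}, CMn n f → CMn n (fun t => f (s * t)) := by
  induction n with
  | zero => intro f hf t ht; exact hf _ (by positivity)
  | succ n ih =>
    intro f hf
    refine ⟨fun t ht => hf.1 _ (by positivity), fun h hh => ?_⟩
    exact (ih (hf.2 (s * h) (by positivity))).congr fun t _ => by simp only [mul_add]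

theorem CMn.const {n : ℕ} : ∀ {c : ℝ}, 0 ≤ c → CMn n (fun _ => c) := by
  induction n with
  | zero => intro c hc t _; exact hc
  | succ n ih =>
    intro c hc
    exact ⟨fun t _ => hc, fun h _ => (ih le_rfl).congr fun t _ => by ring⟩

theorem CMn.mul {n : ℕ} : ∀ {f g : ℝ → ℝ}, CMn n f → CMn n g → CMn n (fun t => f t * g t) := by
  induction n with
  | zero => intro f g hf hg t ht; exact mul_nonneg (hf t ht) (hg t ht)
  | succ n ih =>
    intro f g hf hg
    refine ⟨fun t ht => mul_nonneg (hf.1 t ht) (hg.1 t ht), fun h hh => ?_⟩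
    exact ((ih (hf.2 h hh) hg.mono).add (ih (hf.mono.shift hh) (hg.2 h hh))).congr
      fun t _ => by ring

theorem CMn.pow {n : ℕ} {f : ℝ → ℝ} (hf : CMn n f) (m : ℕ) : CMn n (fun t => f t ^ m) := by
  induction m with
  | zero => simpa using CMn.const zero_le_one
  | succ m ih => simpa only [pow_succ] using ih.mul hf

theorem CMn.of_seq {n : ℕ} : ∀ {F : ℕ → ℝ → ℝ},
    (∀ m t, 0 < t → HasDerivAt (F m) (-(F (m + 1) t)) t) → (∀ m t, 0 < t → 0 ≤ F m t) →
    CMn n (F 0) := by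
  induction n with
  | zero => intro F _ h t ht; exact h 0 t ht
  | succ n ih =>
    intro F hd hF
    refine ⟨hF 0, fun h hh => ?_⟩
    refine ih (F := fun m t => F m t - F m (t + h)) (fun m t ht => ?_) (fun m t ht => ?_)
    · have h1 := (hd m t ht).sub ((hd m (t + h) (by linarith)).comp_add_const t h)
      refine h1.congr_deriv ?_
      ring
    · have : AntitoneOn (F m) (Set.Ioi 0) := by
        refine antitoneOn_of_deriv_nonpos (convex_Ioi 0)
          (fun x hx => (hd m x hx).continuousAt.continuousWithinAt)
          (fun x hx => ?_) (fun x hx => ?_)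
        · rw [interior_Ioi] at hx
          exact (hd m x hx).differentiableAt.differentiableWithinAt
        · rw [interior_Ioi] at hx
          rw [(hd m x hx).deriv]
          linarith [hF (m + 1) x hx]
      have := this (Set.mem_Ioi.2 ht) (Set.mem_Ioi.2 (by linarith : 0 < t + h)) (by linarith)
      simpa using this

theorem pochR_nonneg {s : ℝ} (hs : 0 ≤ s) (m : ℕ) : 0 ≤ ∏ i ∈ Finset.range m, (s + (i : ℝ)) :=
  Finset.prod_nonneg fun i _ => by positivity

theorem CMn.rpow_neg {n : ℕ} {s : ℝ} (hs : 0 ≤ s) : CMn n (fun t => t ^ (-s)) := by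
  have := CMn.of_seq (n := n)
    (F := fun m t => (∏ i ∈ Finset.range m, (s + (i : ℝ))) * t ^ (-s - m)) ?_ ?_
  · simpa using this
  · intro m t ht
    have h1 := (Real.hasDerivAt_rpow_const (x := t) (p := -s - m) (Or.inl ht.ne')).const_mul
      (∏ i ∈ Finset.range m, (s + (i : ℝ)))
    refine h1.congr_deriv ?_
    rw [Finset.prod_range_succ]
    push_cast
    rw [show -s - ((m : ℝ) + 1) = -s - m - 1 by ring]
    ring
  · intro m t ht
    exact mul_nonneg (pochR_nonneg hs m) (by positivity)

theorem CMn.rpow_diff {n : ℕ} {α h : ℝ} (hα0 : 0 < α) (hα1 : α ≤ 1) (hh : 0 < h) :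
    CMn n (fun t => (t + h) ^ α - t ^ α) := by
  have := CMn.of_seq (n := n)
    (F := fun m t => Nat.casesOn m ((t + h) ^ α - t ^ α) fun m =>
      α * (∏ i ∈ Finset.range m, ((1 - α) + (i : ℝ))) *
        (t ^ (α - 1 - m) - (t + h) ^ (α - 1 - m))) ?_ ?_
  · exact this
  · intro m t ht
    cases m with
    | zero =>
      have h1 := (Real.hasDerivAt_rpow_const (x := t) (p := α) (Or.inl ht.ne'))
      have h2 := (Real.hasDerivAt_rpow_const (x := t + h) (p := α)
        (Or.inl (by positivity))).comp_add_const t h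
      refine (h2.sub h1).congr_deriv ?_
      simp
      ring
    | succ m =>
      have h1 := (Real.hasDerivAt_rpow_const (x := t) (p := α - 1 - m) (Or.inl ht.ne'))
      have h2 := (Real.hasDerivAt_rpow_const (x := t + h) (p := α - 1 - m)
        (Or.inl (by positivity))).comp_add_const t h
      refine ((h1.sub h2).const_mul
        (α * (∏ i ∈ Finset.range m, ((1 - α) + (i : ℝ))))).congr_deriv ?_
      simp only [Finset.prod_range_succ]
      push_cast
      rw [show α - 1 - ((m : ℝ) + 1) = α - 1 - m - 1 by ring]
      ring
  · intro m t ht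
    cases m with
    | zero =>
      exact sub_nonneg.2 (Real.rpow_le_rpow ht.le (by linarith) hα0.le)
    | succ m =>
      refine mul_nonneg (mul_nonneg hα0.le (pochR_nonneg (by linarith) m)) (sub_nonneg.2 ?_)
      refine Real.rpow_le_rpow_of_nonpos ht (by linarith) ?_
      have : (0 : ℝ) ≤ m := by positivity
      linarith

theorem CMn.inv_rpow {α c : ℝ} (hα0 : 0 < α) (hα1 : α ≤ 1) (hc : 0 ≤ c) {n : ℕ} :
    CMn n (fun t => (1 + c * t ^ α)⁻¹) := by
  induction n with
  | zero => intro t ht; positivity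
  | succ n ih =>
    refine ⟨fun t ht => by positivity, fun h hh => ?_⟩
    refine (((CMn.const hc).mul (CMn.rpow_diff hα0 hα1 hh)).mul (ih.mul (ih.shift hh))).congr
      fun t ht => ?_
    have h1 : 1 + c * t ^ α ≠ 0 := by positivity
    have h2 : 1 + c * (t + h) ^ α ≠ 0 := by positivity
    field_simp
    ring

theorem CMn.exp_rpow {α : ℝ} (hα0 : 0 < α) (hα1 : α ≤ 1) {n : ℕ} :
    CMn n (fun t => Real.exp (-(t ^ α))) := by
  refine CMn.lim (l := (atTop : Filter ℕ)) (F := fun m t => ((1 + 1 / (m : ℝ) * t ^ α)⁻¹) ^ m)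
    (Eventually.of_forall fun m => (CMn.inv_rpow hα0 hα1 (by positivity)).pow m) fun t ht => ?_
  have := (Real.tendsto_one_add_div_pow_exp (t ^ α)).inv₀ (Real.exp_pos _).ne'
  rw [Real.exp_neg]
  refine this.congr fun m => ?_
  rw [inv_pow]
  congr 3
  ring

/-- from finite differences to derivatives -/
theorem CMn.neg_deriv {f : ℝ → ℝ} (hf : ∀ n, CMn n f) (hd : DifferentiableOn ℝ f (Set.Ioi 0))
    (n : ℕ) : CMn n (fun t => -derivWithin f (Set.Ioi 0) t) := by
  refine CMn.lim (l := 𝓝[>] (0 : ℝ)) (F := fun h t => h⁻¹ * (f t - f (t + h))) ?_ ?_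
  · filter_upwards [self_mem_nhdsWithin] with h hh
    exact (CMn.const (inv_nonneg.2 (le_of_lt hh))).mul ((hf (n + 1)).2 h hh)
  · intro t ht
    have h1 := (hd t ht).hasDerivWithinAt.hasDerivAt (Ioi_mem_nhds ht)
    have h2 := h1.tendsto_slope_zero_right.neg
    refine h2.congr fun h => ?_
    simp only [smul_eq_mul]
    ring

theorem CMn.iterated {f : ℝ → ℝ} (hf : ∀ n, CMn n f) (hd : ContDiffOn ℝ (⊤ : ℕ∞) f (Set.Ioi 0))
    (k : ℕ) : ∀ n, CMn n (fun t => (-1 : ℝ) ^ k * iteratedDerivWithin k f (Set.Ioi 0) t) := by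
  induction k with
  | zero => intro n; simpa using hf n
  | succ k ih =>
    intro n
    have h1 : DifferentiableOn ℝ (fun t => iteratedDerivWithin k f (Set.Ioi 0) t) (Set.Ioi 0) :=
      hd.differentiableOn_iteratedDerivWithin (by exact_mod_cast WithTop.coe_lt_top _)
        (uniqueDiffOn_Ioi 0)
    refine (CMn.neg_deriv ih (h1.const_mul _) n).congr fun t ht => ?_
    rw [iteratedDerivWithin_succ, derivWithin_const_mul _ (h1 t ht), pow_succ]
    ring

/-- Absolute convergence of the exponential generating series everywhere. -/
def EGS (c : ℕ → ℝ) : Prop := ∀ r : ℝ, 0 < r → Summable fun k : ℕ => |c k| * r ^ k / (k.factorial : ℝ)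

noncomputable def egf (c : ℕ → ℝ) (x : ℝ) : ℝ := ∑' k : ℕ, c k * x ^ k / (k.factorial : ℝ)

/-- Coefficient sequences giving completely monotone functions of `t`. -/
def PC (α : ℝ) (c : ℕ → ℝ) : Prop := EGS c ∧ ∀ n, CMn n (fun t => egf c (-(t ^ α)))

theorem EGS.of_le {b c : ℕ → ℝ} (hb : EGS b) (h : ∀ k, |c k| ≤ b k) : EGS c := by
  intro r hr
  refine (hb r hr).of_nonneg_of_le (fun k => by positivity) fun k => ?_
  have := (h k).trans (le_abs_self _)
  gcongr

theorem EGS.summable {c : ℕ → ℝ} (hc : EGS c) {x : ℝ} (hx : x ≠ 0) :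
    Summable fun k : ℕ => c k * x ^ k / (k.factorial : ℝ) := by
  refine Summable.of_norm ((hc |x| (abs_pos.2 hx)).congr fun k => ?_)
  simp [abs_mul, abs_div]

theorem EGS.mul_const {c : ℕ → ℝ} (hc : EGS c) (K : ℝ) : EGS (fun k => |c k| * K) := by
  intro r hr
  refine ((hc r hr).mul_right |K|).congr fun k => ?_
  simp only [abs_mul, abs_abs]
  ring

theorem PC.lim {α : ℝ} {ι : Type*} {l : Filter ι} [l.NeBot] {C : ι → ℕ → ℝ} {c b : ℕ → ℝ}
    (hC : ∀ᶠ i in l, PC α (C i)) (hb : EGS b) (hle : ∀ᶠ i in l, ∀ k, |C i k| ≤ b k)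
    (hl : ∀ k, Tendsto (fun i => C i k) l (𝓝 (c k))) : PC α c := by
  refine ⟨hb.of_le fun k => le_of_tendsto (hl k).abs (hle.mono fun i hi => hi k), fun n => ?_⟩
  refine CMn.lim (l := l) (F := fun i t => egf (C i) (-(t ^ α))) (hC.mono fun i hi => hi.2 n) ?_
  intro t ht
  have hx : 0 < t ^ α := by positivity
  refine tendsto_tsum_of_dominated_convergence (hb (t ^ α) hx) (fun k => ?_)
    (hle.mono fun i hi k => ?_)
  · exact ((hl k).mul_const _).div_const _
  · have := (hi k).trans (le_abs_self _)
    rw [norm_div, norm_mul, norm_pow, norm_neg, Real.norm_eq_abs, Real.norm_eq_abs,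
      Real.norm_eq_abs, abs_of_pos hx, abs_of_pos (by positivity : (0 : ℝ) < k.factorial)]
    gcongr

theorem PC.congr {α : ℝ} {c d : ℕ → ℝ} (hc : PC α c) (h : ∀ k, c k = d k) : PC α d := by
  rwa [← show c = d from funext h]

theorem PC.one {α : ℝ} (hα0 : 0 < α) (hα1 : α ≤ 1) : PC α (fun _ => 1) := by
  refine ⟨fun r _ => ?_, fun n => ?_⟩
  · simpa using Real.summable_pow_div_factorial r
  · refine (CMn.exp_rpow hα0 hα1).congr fun t _ => ?_
    rw [Real.exp_eq_exp_ℝ, NormedSpace.exp_eq_tsum_div]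
    simp [egf]

theorem PC.add {α : ℝ} {c d : ℕ → ℝ} (hc : PC α c) (hd : PC α d) : PC α (fun k => c k + d k) := by
  refine ⟨fun r hr => ?_, fun n => ?_⟩
  · refine ((hc.1 r hr).add (hd.1 r hr)).of_nonneg_of_le (fun k => by positivity) fun k => ?_
    rw [← add_div, ← add_mul]
    have := abs_add_le (c k) (d k)
    gcongr
  · refine ((hc.2 n).add (hd.2 n)).congr fun t ht => ?_
    have hx : -(t ^ α) ≠ 0 := neg_ne_zero.2 (by positivity)
    simp only [egf]
    rw [← (hc.1.summable hx).tsum_add (hd.1.summable hx)]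
    refine tsum_congr fun k => ?_
    ring

theorem PC.smul {α s : ℝ} {c : ℕ → ℝ} (hs : 0 ≤ s) (hc : PC α c) : PC α (fun k => s * c k) := by
  refine ⟨?_, fun n => ?_⟩
  · refine (hc.1.mul_const s).of_le fun k => ?_
    rw [abs_mul, abs_of_nonneg hs, mul_comm]
  · refine ((CMn.const hs).mul (hc.2 n)).congr fun t ht => ?_
    simp only [egf]
    rw [← tsum_mul_left]
    refine tsum_congr fun k => ?_
    ring

theorem PC.dilate {α s : ℝ} {c : ℕ → ℝ} (hα0 : 0 < α) (hs : 0 < s) (hc : PC α c) :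
    PC α (fun k => s ^ k * c k) := by
  refine ⟨fun r hr => ?_, fun n => ?_⟩
  · refine (hc.1 (s * r) (by positivity)).congr fun k => ?_
    rw [abs_mul, abs_of_pos (by positivity : 0 < s ^ k), mul_pow]
    ring
  · refine ((hc.2 n).scale (s := s ^ α⁻¹) (by positivity)).congr fun t ht => ?_
    rw [Real.mul_rpow (by positivity) ht.le, ← Real.rpow_mul hs.le, inv_mul_cancel₀ hα0.ne',
      Real.rpow_one]
    simp only [egf]
    refine tsum_congr fun k => ?_
    rw [← mul_neg, mul_pow]
    ring

theorem PC.geom {α δ a : ℝ} {c : ℕ → ℝ} (hα0 : 0 < α) (hc : PC α c) (N : ℕ) :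
    PC α (fun k => (∑ j ∈ Finset.range N, Real.exp (-(δ * (k + a))) ^ j) * c k) := by
  induction N with
  | zero => exact (hc.smul le_rfl).congr fun k => by simp
  | succ N ih =>
    refine (ih.add ((hc.dilate hα0 (Real.exp_pos (-(δ * N)))).smul
      (Real.exp_pos (-(δ * N * a))).le)).congr fun k => ?_
    rw [Finset.sum_range_succ, add_mul, ← mul_assoc, ← Real.exp_nat_mul, ← Real.exp_nat_mul,
      ← Real.exp_add]
    congr 3
    ring

theorem PC.geom_inf {α δ a : ℝ} {c : ℕ → ℝ} (hα0 : 0 < α) (hδ : 0 < δ) (ha : 0 < a)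
    (hc : PC α c) : PC α (fun k => (1 - Real.exp (-(δ * (k + a))))⁻¹ * c k) := by
  have hr : ∀ k : ℕ, Real.exp (-(δ * (k + a))) < 1 := fun k => by
    rw [Real.exp_lt_one_iff, neg_lt_zero]; positivity
  have hs := fun k : ℕ => hasSum_geometric_of_lt_one (Real.exp_pos (-(δ * (k + a)))).le (hr k)
  refine PC.lim (l := (atTop : Filter ℕ))
    (C := fun N k => (∑ j ∈ Finset.range N, Real.exp (-(δ * (k + a))) ^ j) * c k)
    (b := fun k => |c k| * (1 - Real.exp (-(δ * ((0 : ℕ) + a))))⁻¹)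
    (Eventually.of_forall fun N => hc.geom hα0 N) (hc.1.mul_const _)
    (Eventually.of_forall fun N k => ?_) (fun k => (hs k).tendsto_sum_nat.mul_const _)
  have h1 : ∑ j ∈ Finset.range N, Real.exp (-(δ * (k + a))) ^ j
      ≤ (1 - Real.exp (-(δ * (k + a))))⁻¹ :=
    sum_le_hasSum _ (fun j _ => by positivity) (hs k)
  have h2 : (1 - Real.exp (-(δ * (k + a))))⁻¹ ≤ (1 - Real.exp (-(δ * ((0 : ℕ) + a))))⁻¹ := by
    apply inv_anti₀ (by linarith [hr 0])
    have : Real.exp (-(δ * (k + a))) ≤ Real.exp (-(δ * ((0 : ℕ) + a))) := by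
      apply Real.exp_le_exp.2
      push_cast
      have : (0 : ℝ) ≤ k := by positivity
      nlinarith
    linarith
  rw [abs_mul, abs_of_nonneg (Finset.sum_nonneg fun j _ => by positivity), mul_comm]
  have := h1.trans h2
  gcongr

theorem exp_squeeze {δ s : ℝ} (hδ : 0 < δ) (hs : 0 < s) :
    s⁻¹ ≤ δ * (1 - Real.exp (-(δ * s)))⁻¹ ∧ δ * (1 - Real.exp (-(δ * s)))⁻¹ ≤ s⁻¹ + δ := by
  have hy : 0 < δ * s := by positivity
  have h0 : 0 < 1 - Real.exp (-(δ * s)) := by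
    rw [sub_pos, Real.exp_lt_one_iff, neg_lt_zero]; exact hy
  have h1 : 1 - Real.exp (-(δ * s)) ≤ δ * s := by
    linarith [Real.add_one_le_exp (-(δ * s))]
  have h2 : Real.exp (-(δ * s)) * (1 + δ * s) ≤ 1 := by
    have := Real.add_one_le_exp (δ * s)
    calc Real.exp (-(δ * s)) * (1 + δ * s) ≤ Real.exp (-(δ * s)) * Real.exp (δ * s) := by
          gcongr; linarith
      _ = 1 := by rw [← Real.exp_add]; simp
  constructor
  · rw [← div_eq_mul_inv, le_div_iff₀ h0, inv_mul_le_iff₀ hs]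
    linarith
  · rw [← div_eq_mul_inv, div_le_iff₀ h0]
    have : (s⁻¹ + δ) * (1 - Real.exp (-(δ * s))) = s⁻¹ * ((1 + δ * s) - Real.exp (-(δ * s)) * (1 + δ * s)) := by
      field_simp
    rw [this]
    calc δ = s⁻¹ * (δ * s) := by field_simp
      _ ≤ _ := by gcongr; linarith

theorem PC.div_add {α a : ℝ} {c : ℕ → ℝ} (hα0 : 0 < α) (ha : 0 < a) (hc : PC α c) :
    PC α (fun k => ((k : ℝ) + a)⁻¹ * c k) := by
  refine PC.lim (l := 𝓝[>] (0 : ℝ))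
    (C := fun δ k => δ * ((1 - Real.exp (-(δ * (k + a))))⁻¹ * c k))
    (b := fun k => |c k| * (a⁻¹ + 1)) ?_ (hc.1.mul_const _) ?_ (fun k => ?_)
  · filter_upwards [self_mem_nhdsWithin] with δ hδ
    exact (hc.geom_inf hα0 hδ ha).smul (le_of_lt hδ)
  · filter_upwards [Ioo_mem_nhdsGT (zero_lt_one' ℝ)] with δ hδ k
    have hk : 0 < (k : ℝ) + a := by positivity
    obtain ⟨h1, h2⟩ := exp_squeeze hδ.1 hk
    have h3 : ((k : ℝ) + a)⁻¹ ≤ a⁻¹ := inv_anti₀ ha (by simp)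
    rw [← mul_assoc, abs_mul, abs_of_nonneg (le_trans (by positivity) h1), mul_comm]
    have : δ * (1 - Real.exp (-(δ * (k + a))))⁻¹ ≤ a⁻¹ + 1 := by linarith [hδ.2]
    gcongr
  · have hk : 0 < (k : ℝ) + a := by positivity
    have h1 : Tendsto (fun δ : ℝ => ((k : ℝ) + a)⁻¹ + δ) (𝓝[>] 0) (𝓝 (((k : ℝ) + a)⁻¹)) := by
      have : Tendsto (fun δ : ℝ => ((k : ℝ) + a)⁻¹ + δ) (𝓝 0) (𝓝 (((k : ℝ) + a)⁻¹ + 0)) :=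
        tendsto_const_nhds.add tendsto_id
      rw [add_zero] at this
      exact this.mono_left nhdsWithin_le_nhds
    have h2 := tendsto_of_tendsto_of_tendsto_of_le_of_le'
      (f := fun δ : ℝ => δ * (1 - Real.exp (-(δ * (k + a))))⁻¹) tendsto_const_nhds h1
      (by filter_upwards [self_mem_nhdsWithin] with δ hδ using (exp_squeeze hδ hk).1)
      (by filter_upwards [self_mem_nhdsWithin] with δ hδ using (exp_squeeze hδ hk).2)
    simpa only [mul_assoc] using h2.mul_const (c k)

theorem PC.prod {α β γ : ℝ} (hα0 : 0 < α) (hα1 : α ≤ 1) (hγ : 0 < γ) (hγβ : α * γ ≤ β) (n : ℕ) :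
    PC α (fun k => ∏ j ∈ Finset.range n, (α * k + β + j) / ((k : ℝ) + γ + j)) := by
  induction n with
  | zero => simpa using PC.one hα0 hα1
  | succ n ih =>
    have hn : (0 : ℝ) ≤ n := by positivity
    have h0 : 0 ≤ β + n - α * (γ + n) := by nlinarith
    refine ((ih.smul hα0.le).add ((ih.div_add hα0 (by positivity : 0 < γ + n)).smul h0)).congr
      fun k => ?_
    rw [Finset.prod_range_succ]
    have : (k : ℝ) + γ + n ≠ 0 := by positivity
    have : (k : ℝ) + (γ + n) ≠ 0 := by positivity
    field_simp
    ring

/-- the approximating coefficients -/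
noncomputable def MM (α β γ : ℝ) (n k : ℕ) : ℝ :=
  (n : ℝ) ^ (γ - β) * (((n : ℝ) ^ (1 - α)) ^ k *
    ∏ j ∈ Finset.range (n + 1), (α * k + β + j) / ((k : ℝ) + γ + j))

theorem prodA {α y : ℝ} (hα0 : 0 < α) (hα1 : α ≤ 1) (hy : 0 < y) (n : ℕ) :
    ∏ j ∈ Finset.range (n + 1), (y + α + j) / (y + (j : ℝ)) ≤ (1 + α / y) * ((y + n) / y) ^ α := by
  induction n with
  | zero =>
    simp [hy.ne']
    rw [add_div, div_self hy.ne']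
  | succ n ih =>
    rw [Finset.prod_range_succ]
    push_cast
    have hz : 0 < y + n := by positivity
    have hw : 0 < y + (n + 1) := by positivity
    have h1 : (y + α + (n + 1)) / (y + (n + 1)) ≤ ((y + (n + 1)) / (y + n)) ^ α := by
      have h2 := rpow_one_add_le_one_add_mul_self (s := -(1 / (y + (n + 1))))
        (by rw [neg_le_neg_iff, div_le_one hw]; linarith) hα0.le hα1
      have e1 : 1 + -(1 / (y + ((n : ℝ) + 1))) = ((y + (n + 1)) / (y + n))⁻¹ := by
        field_simp; ring
      rw [e1, Real.inv_rpow (by positivity)] at h2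
      rw [inv_le_iff_one_le_mul₀ (by positivity)] at h2
      have h3 : (1 + α * -(1 / (y + ((n : ℝ) + 1)))) * ((y + α + (n + 1)) / (y + (n + 1))) ≤ 1 := by
        have : (1 + α * -(1 / (y + ((n : ℝ) + 1)))) * ((y + α + (n + 1)) / (y + (n + 1)))
          = 1 - (α / (y + (n + 1))) ^ 2 := by field_simp; ring
        rw [this]; nlinarith [sq_nonneg (α / (y + ((n : ℝ) + 1)))]
      have hp : 0 < 1 + α * -(1 / (y + ((n : ℝ) + 1))) := by
        have : α * (1 / (y + ((n : ℝ) + 1))) < 1 := by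
          rw [mul_one_div, div_lt_one hw]; linarith
        linarith
      by_contra hcon
      push Not at hcon
      nlinarith
    calc _ ≤ ((1 + α / y) * ((y + n) / y) ^ α) * ((y + (n + 1)) / (y + n)) ^ α := by gcongr
      _ = _ := by
        rw [mul_assoc, ← Real.mul_rpow (by positivity) (by positivity)]
        congr 2
        field_simp

theorem prodB {x : ℝ} (hx : 0 < x) (n : ℕ) :
    ∏ j ∈ Finset.range (n + 1), (x + j) / (x + 1 + (j : ℝ)) = x / (x + n + 1) := by
  induction n with
  | zero => simp
  | succ n ih =>
    rw [Finset.prod_range_succ, ih]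
    push_cast
    have : x + n + 1 ≠ 0 := by positivity
    have : x + 1 + (n + 1) ≠ 0 := by positivity
    field_simp
    ring

theorem MM_nonneg {α β γ : ℝ} (hα0 : 0 < α) (hβ : 0 < β) (hγ : 0 < γ) (n k : ℕ) :
    0 ≤ MM α β γ n k := by
  unfold MM
  refine mul_nonneg (by positivity) (mul_nonneg (by positivity)
    (Finset.prod_nonneg fun j _ => by positivity))

theorem MM_succ {α β γ : ℝ} (hα0 : 0 < α) (hα1 : α ≤ 1) (hβ : 0 < β) (hβ1 : β ≤ 1) (hγ : 0 < γ)
    (n k : ℕ) : MM α β γ n (k + 1) ≤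
      MM α β γ n k * ((1 + α / β) * (k + γ) * (α * k + β) ^ (-α)) := by
  set y := α * k + β with hy
  set x := (k : ℝ) + γ with hx
  have hk : (0 : ℝ) ≤ k := by positivity
  have hy0 : 0 < y := by positivity
  have hx0 : 0 < x := by positivity
  have e1 : ∏ j ∈ Finset.range (n + 1), (α * ((k + 1 : ℕ) : ℝ) + β + j) / (((k + 1 : ℕ) : ℝ) + γ + j)
      = (∏ j ∈ Finset.range (n + 1), (y + j) / (x + j)) *
        ((∏ j ∈ Finset.range (n + 1), (y + α + j) / (y + (j : ℝ))) *
         ∏ j ∈ Finset.range (n + 1), (x + j) / (x + 1 + (j : ℝ))) := by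
    rw [← Finset.prod_mul_distrib, ← Finset.prod_mul_distrib]
    refine Finset.prod_congr rfl fun j _ => ?_
    have a1 : α * ((k + 1 : ℕ) : ℝ) + β + j = y + α + j := by push_cast; rw [hy]; ring
    have a2 : ((k + 1 : ℕ) : ℝ) + γ + j = x + 1 + j := by push_cast; rw [hx]; ring
    rw [a1, a2]
    have : y + j ≠ 0 := by positivity
    have : x + j ≠ 0 := by positivity
    have : x + 1 + j ≠ 0 := by positivity
    field_simp
  have e2 : MM α β γ n (k + 1) = MM α β γ n k * ((n : ℝ) ^ (1 - α) *
      ((∏ j ∈ Finset.range (n + 1), (y + α + j) / (y + (j : ℝ))) * (x / (x + n + 1)))) := by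
    unfold MM
    rw [e1, prodB hx0, pow_succ]
    ring
  rw [e2]
  refine mul_le_mul_of_nonneg_left ?_ (MM_nonneg hα0 hβ hγ n k)
  have h1 := prodA hα0 hα1 hy0 n
  have h2 : (1 + α / y) ≤ 1 + α / β := by
    have : β ≤ y := by rw [hy]; nlinarith
    gcongr
  have h3 : (n : ℝ) ^ (1 - α) ≤ (y + n) ^ (1 - α) :=
    Real.rpow_le_rpow (by positivity) (by linarith) (by linarith)
  have h4 : (y + n) ^ (1 - α) * (y + n) ^ α = y + n := by
    rw [← Real.rpow_add (by positivity)]; simp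
  have h5 : y + n ≤ x + n + 1 := by rw [hy, hx]; nlinarith
  calc _ ≤ (y + n) ^ (1 - α) * (((1 + α / β) * ((y + n) / y) ^ α) * (x / (x + n + 1))) := by
        gcongr
        exact h1.trans (by gcongr)
    _ = (1 + α / β) * x * y ^ (-α) * (((y + n) ^ (1 - α) * (y + n) ^ α) / (x + n + 1)) := by
        rw [Real.div_rpow (by positivity) hy0.le, Real.rpow_neg hy0.le]
        field_simp
    _ ≤ (1 + α / β) * x * y ^ (-α) * 1 := by
        rw [h4]
        gcongr
        rw [div_le_one (by positivity)]
        exact h5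
    _ = _ := by ring

noncomputable def BB (α β γ K : ℝ) (k : ℕ) : ℝ :=
  K * ∏ i ∈ Finset.range k, ((1 + α / β) * (i + γ) * (α * i + β) ^ (-α))

theorem MM_le {α β γ K : ℝ} (hα0 : 0 < α) (hα1 : α ≤ 1) (hβ : 0 < β) (hβ1 : β ≤ 1) (hγ : 0 < γ)
    (n k : ℕ) (hK : MM α β γ n 0 ≤ K) : MM α β γ n k ≤ BB α β γ K k := by
  induction k with
  | zero => simpa [BB] using hK
  | succ k ih =>
    refine (MM_succ hα0 hα1 hβ hβ1 hγ n k).trans ?_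
    unfold BB at ih ⊢
    rw [Finset.prod_range_succ, ← mul_assoc K]
    exact mul_le_mul_of_nonneg_right ih (by positivity)

theorem BB_EGS {α β γ K : ℝ} (hα0 : 0 < α) (hβ : 0 < β) (hγ : 0 < γ) (hK : 0 < K) :
    EGS (BB α β γ K) := by
  have hpos : ∀ k, 0 < BB α β γ K k := fun k =>
    mul_pos hK (Finset.prod_pos fun i _ => by positivity)
  intro r hr
  have hp2 : ∀ k : ℕ, 0 < |BB α β γ K k| * r ^ k / (k.factorial : ℝ) := fun k => by
    have := hpos k
    positivity
  refine summable_of_ratio_test_tendsto_lt_one zero_lt_one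
    (Eventually.of_forall fun k => (hp2 k).ne') ?_
  have h1 : Tendsto (fun k : ℕ => ((k : ℝ) + γ) / (k + 1)) atTop (𝓝 1) := by
    have h := (tendsto_const_nhds (x := (1 : ℝ))).add
      ((tendsto_one_div_add_atTop_nhds_zero_nat (𝕜 := ℝ)).const_mul (γ - 1))
    rw [mul_zero, add_zero] at h
    refine h.congr fun k => ?_
    field_simp
    ring
  have h2 : Tendsto (fun k : ℕ => (α * k + β) ^ (-α)) atTop (𝓝 0) :=
    (tendsto_rpow_neg_atTop hα0).comp
      (tendsto_atTop_add_const_right _ _ (tendsto_natCast_atTop_atTop.const_mul_atTop hα0))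
  have h3 := (h1.mul h2).const_mul ((1 + α / β) * r)
  rw [mul_zero, mul_zero] at h3
  refine h3.congr fun k => ?_
  rw [Real.norm_of_nonneg (hp2 _).le, Real.norm_of_nonneg (hp2 _).le, abs_of_pos (hpos _),
    abs_of_pos (hpos _)]
  have e : BB α β γ K (k + 1) = BB α β γ K k * ((1 + α / β) * (k + γ) * (α * k + β) ^ (-α)) := by
    unfold BB
    rw [Finset.prod_range_succ, ← mul_assoc K]
  rw [e, Nat.factorial_succ, pow_succ]
  push_cast
  have := (hpos k).ne'
  have : (k.factorial : ℝ) ≠ 0 := by positivity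
  field_simp

theorem MM_tendsto {α β γ : ℝ} (hα0 : 0 < α) (hβ : 0 < β) (hγ : 0 < γ) (k : ℕ) :
    Tendsto (fun n => MM α β γ n k) atTop
      (𝓝 (Real.Gamma (k + γ) / Real.Gamma (α * k + β))) := by
  have hy0 : 0 < α * k + β := by positivity
  have hx0 : 0 < (k : ℝ) + γ := by positivity
  refine ((Real.GammaSeq_tendsto_Gamma ((k : ℝ) + γ)).div
    (Real.GammaSeq_tendsto_Gamma (α * k + β)) (Real.Gamma_pos_of_pos hy0).ne').congr' ?_
  filter_upwards [eventually_gt_atTop 0] with n hn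
  have hn' : (0 : ℝ) < n := by exact_mod_cast hn
  unfold MM
  rw [Pi.div_apply, Real.GammaSeq, Real.GammaSeq, Finset.prod_div_distrib]
  have h1 : ∏ j ∈ Finset.range (n + 1), ((k : ℝ) + γ + j) ≠ 0 :=
    Finset.prod_ne_zero_iff.2 fun j _ => by positivity
  have h2 : ∏ j ∈ Finset.range (n + 1), (α * k + β + j) ≠ 0 :=
    Finset.prod_ne_zero_iff.2 fun j _ => by positivity
  have h3 : (n : ℝ) ^ ((k : ℝ) + γ) = (n : ℝ) ^ (γ - β) * ((n : ℝ) ^ (1 - α)) ^ k *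
      (n : ℝ) ^ (α * k + β) := by
    rw [← Real.rpow_natCast, ← Real.rpow_mul hn'.le, ← Real.rpow_add hn', ← Real.rpow_add hn']
    congr 1
    ring
  have h4 : (n : ℝ) ^ (α * k + β) ≠ 0 := by positivity
  have h5 : (n.factorial : ℝ) ≠ 0 := by positivity
  rw [h3]
  field_simp

theorem PC_gamma {α β γ : ℝ} (hα0 : 0 < α) (hα1 : α ≤ 1) (hβ : 0 < β) (hβ1 : β ≤ 1) (hγ : 0 < γ)
    (hγβ : α * γ ≤ β) : PC α (fun k => Real.Gamma (k + γ) / Real.Gamma (α * k + β)) := by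
  obtain ⟨K, hK⟩ := (MM_tendsto hα0 hβ hγ 0).bddAbove_range
  have hK' : ∀ n, MM α β γ n 0 ≤ max K 1 := fun n => (hK ⟨n, rfl⟩).trans (le_max_left _ _)
  refine PC.lim (l := (atTop : Filter ℕ)) (C := fun n k => MM α β γ n k)
    (b := BB α β γ (max K 1)) ?_ (BB_EGS hα0 hβ hγ (by positivity))
    (Eventually.of_forall fun n k => ?_) (fun k => MM_tendsto hα0 hβ hγ k)
  · filter_upwards [eventually_gt_atTop 0] with n hn
    have hn' : (0 : ℝ) < n := by exact_mod_cast hn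
    exact (((PC.prod hα0 hα1 hγ hγβ (n + 1)).dilate hα0 (by positivity)).smul (by positivity))
  · rw [abs_of_nonneg (MM_nonneg hα0 hβ hγ n k)]
    exact MM_le hα0 hα1 hβ hβ1 hγ n k (hK' n)

theorem EGS.contDiff {c : ℕ → ℝ} (hc : EGS c) : ContDiff ℝ (⊤ : ℕ∞) (egf c) := by
  set a : ℕ → ℝ := fun k => c k / (k.factorial : ℝ) with ha
  have hr : (FormalMultilinearSeries.ofScalars ℝ a).radius = ⊤ := by
    refine FormalMultilinearSeries.radius_eq_top_of_summable_norm _ fun r => ?_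
    refine (hc (r + 1) (by positivity)).of_nonneg_of_le (fun k => by positivity) fun k => ?_
    rw [FormalMultilinearSeries.ofScalars_norm, ha, norm_div, Real.norm_eq_abs,
      Real.norm_of_nonneg (by positivity : (0 : ℝ) ≤ k.factorial), div_mul_eq_mul_div]
    gcongr
    simp
  have h1 := (FormalMultilinearSeries.ofScalars ℝ a).hasFPowerSeriesOnBall (by rw [hr]; simp)
  rw [hr] at h1
  have h2 := h1.analyticOnNhd
  have h3 : (FormalMultilinearSeries.ofScalars ℝ a).sum = egf c := by
    funext x
    refine (FormalMultilinearSeries.ofScalars_sum_eq a x).trans ?_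
    simp only [egf, ha, smul_eq_mul]
    exact tsum_congr fun k => by ring
  rw [h3] at h2
  rw [← contDiffOn_univ]
  refine (h2.contDiffOn (n := (⊤ : ℕ∞)) ?_).mono ?_
  · simp
  · simp

theorem Gamma_poch {γ : ℝ} (hγ : 0 < γ) (k : ℕ) :
    Real.Gamma (k + γ) = poch γ k * Real.Gamma γ := by
  induction k with
  | zero => simp [poch]
  | succ k ih =>
    have : ((k + 1 : ℕ) : ℝ) + γ = (k + γ) + 1 := by push_cast; ring
    rw [this, Real.Gamma_add_one (by positivity), ih]
    unfold poch
    rw [Finset.prod_range_succ]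
    ring

/-- For `0 < α ≤ 1` and `0 < αγ ≤ β ≤ 1`, the function `t ↦ t^{β-1} E_{α,β}^γ(-t^α)` is
completely monotonic on `(0, ∞)`: it is infinitely differentiable there and
`(-1)^k f^{(k)}(t) ≥ 0` for all `k ≥ 0` and `t > 0`. -/
theorem prabhakar_kernel_completelyMonotone (α β γ : ℝ)
    (hα0 : 0 < α) (hα1 : α ≤ 1) (hγ : 0 < α * γ) (hγβ : α * γ ≤ β) (hβ : β ≤ 1) :
    ContDiffOn ℝ (⊤ : ℕ∞) (fun t : ℝ => t ^ (β - 1) * prabhakarR α β γ (-(t ^ α)))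
      (Set.Ioi (0 : ℝ)) ∧
    ∀ k : ℕ, ∀ t ∈ Set.Ioi (0 : ℝ),
      0 ≤ (-1 : ℝ) ^ k *
        iteratedDerivWithin k (fun t : ℝ => t ^ (β - 1) * prabhakarR α β γ (-(t ^ α)))
          (Set.Ioi (0 : ℝ)) t := by
  have hγ0 : 0 < γ := (mul_pos_iff_of_pos_left hα0).1 hγ
  have hβ0 : 0 < β := hγ.trans_le hγβ
  have hG := Real.Gamma_pos_of_pos hγ0
  have hP : PC α (fun k => poch γ k / Real.Gamma (α * k + β)) := by
    refine ((PC_gamma hα0 hα1 hβ0 hβ hγ0 hγβ).smul (inv_nonneg.2 hG.le)).congr fun k => ?_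
    rw [Gamma_poch hγ0]
    field_simp
  have hE : prabhakarR α β γ = egf (fun k => poch γ k / Real.Gamma (α * k + β)) := by
    funext x
    unfold prabhakarR egf
    refine tsum_congr fun k => ?_
    rw [div_mul_eq_mul_div, div_div, mul_comm (Real.Gamma _)]
  have hS : ContDiffOn ℝ (⊤ : ℕ∞) (fun t : ℝ => t ^ (β - 1) * prabhakarR α β γ (-(t ^ α)))
      (Set.Ioi (0 : ℝ)) := by
    rw [hE]
    have hr : ∀ p : ℝ, ContDiffOn ℝ (⊤ : ℕ∞) (fun t : ℝ => t ^ p) (Set.Ioi (0 : ℝ)) :=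
      fun p t ht => (Real.contDiffAt_rpow_const_of_ne (ne_of_gt ht)).contDiffWithinAt
    exact (hr _).mul (hP.1.contDiff.comp_contDiffOn (hr _).neg)
  refine ⟨hS, fun k t ht => ?_⟩
  refine (CMn.iterated (fun n => ?_) hS k 0) t ht
  have h1 := (CMn.rpow_neg (n := n) (sub_nonneg.2 hβ)).mul (hP.2 n)
  rw [neg_sub] at h1
  rwa [hE]
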